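/- There exist square-free monomial ideals I and J with the same underlying unlabeled hypergraph (same vertex set and same edge set 𝓔, forgetting labels) but different regularity. Specifically, I = (ac, bc) and J = (acd, bcd) both have hypergraphs with vertex set {1,2} and edge set {{1},{2},{1,2}}, yet reg(R/I) = 1 and reg(R/J) = 2. -/

import Mathlib

/-!
The two hypergraphs are compared by evaluation, so the content is the regularity.

Write `J = d·I` and `I = c·(a, b)`. Multiplication by a variable gives exact sequences
`0 → R/(a,b)(-1) → R/I → R/(c) → 0` and `0 → R/I(-1) → R/J → R/(d) → 0`, so an upper bound on the
degrees in which Koszul homology lives passes from the outer terms to the middle one, with a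
shift by one on the left (`KVanish.X_mul`). For the quotient by a set `V` of variables the
bound is zero (`KVanish.span_X`): for each variable `v ∉ V`, the map
`p e_S ↦ (p / X_v) e_v ∧ e_S` is a homotopy from the identity to the projection that discards
everything involving `X_v` or `e_v`, and after all of these projections a coefficient of positive
degree lies in `(V)`. Hence the regularities are at most `1` and `2`.

For the lower bound, the first Betti number in degree `e` is nonzero when `I` has a minimal
generator of degree `e`: writing it as `X_v q`, the cycle `q e_v` is not a boundary, because the
Koszul differential over `R` sends lifts of boundaries into `𝔪 I` (`bettiNe_one`). The generators
`ac` and `acd` give the values `2 - 1 = 1` and `3 - 1 = 2`.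

All computations take place with lifts to `R` and with all homological degrees together, a chain
being a function on the subsets of the variables.
-/

/-!
Common setup: square-free monomial ideals in `R = K[A]` (here `MvPolynomial σ K`
with `σ` the finite alphabet `A`), encoded by the finite antichain `G` of
supports of their minimal monomial generators; the labeled hypergraph `H(I)`
of such an ideal, whose vertex set is (in bijection with) `G` and whose edge
labeled by a variable `a` is `E_a = { S ∈ G : a ∈ S }`; and Castelnuovo–Mumford
regularity and projective dimension of `R/I`, defined via graded Betti numbers
`β_{ij}(R/I) = dim_K Tor_i^R(R/I, K)_j`, which are computed from the Koszul
complex of the variables tensored with `R/I`.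
-/

open MvPolynomial Finset
open scoped Classical

namespace SqfreeHyp

variable (σ : Type) [Fintype σ] [LinearOrder σ] (K : Type) [Field K]

/-- The square-free monomial `∏_{a ∈ S} a`. -/
noncomputable def sqMon (S : Finset σ) : MvPolynomial σ K := ∏ a ∈ S, X a

/-- The square-free monomial ideal whose (minimal) monomial generators have
supports exactly the members of `G`. -/
noncomputable def monIdeal (G : Finset (Finset σ)) : Ideal (MvPolynomial σ K) :=
  Ideal.span ((fun S => sqMon σ K S) '' (G : Set (Finset σ)))

/-- `G` is an antichain under inclusion (= divisibility of the square-free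
monomials): the corresponding monomial generating set is minimal. -/
def MinGens (G : Finset (Finset σ)) : Prop := ∀ S ∈ G, ∀ T ∈ G, S ⊆ T → S = T

/-- `E_a`: the edge of the labeled hypergraph `H(I)` labeled by the variable `a`,
consisting of the (vertices corresponding to the) generators divisible by `a`. -/
def EdgeOf (G : Finset (Finset σ)) (a : σ) : Finset (Finset σ) :=
  G.filter (fun S => a ∈ S)

/-- The set `𝓔` of (nonempty) edges of the labeled hypergraph. -/
noncomputable def edgeSet (G : Finset (Finset σ)) : Finset (Finset (Finset σ)) :=
  (Finset.univ.image (EdgeOf σ G)).filter (· ≠ ∅)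

/-- `X`: the set of variables appearing among the generators (the labels). -/
def varsOf (G : Finset (Finset σ)) : Finset σ := G.biUnion id

/-- A vertex is closed if its singleton is an edge. -/
def Closed (G : Finset (Finset σ)) (v : Finset σ) : Prop :=
  ∃ a : σ, EdgeOf σ G a = {v}

/-- The neighbors `N_H(v)` of a vertex: the other vertices sharing an edge with `v`. -/
noncomputable def Neighbors (G : Finset (Finset σ)) (v : Finset σ) : Finset (Finset σ) :=
  G.filter (fun w => w ≠ v ∧ ∃ a : σ, v ∈ EdgeOf σ G a ∧ w ∈ EdgeOf σ G a)

/-- The open (= not closed) vertices. -/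
noncomputable def openVerts (G : Finset (Finset σ)) : Finset (Finset σ) :=
  G.filter (fun v => ¬ Closed σ G v)

/-- The minimal members of a family of supports (used to pass to the minimal
monomial generating sets of colon ideals and sums). -/
def minimalize (A : Finset (Finset σ)) : Finset (Finset σ) :=
  A.filter (fun S => ∀ T ∈ A, T ⊆ S → T = S)

/-- An edge is simple if it has at least two vertices and has no proper
subedge besides `∅`. -/
def SimpleEdge (G : Finset (Finset σ)) (F : Finset (Finset σ)) : Prop :=
  F ∈ edgeSet σ G ∧ 2 ≤ F.card ∧ ∀ F' ∈ edgeSet σ G, F' ⊆ F → F' = F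

/-- The set of simple edges. -/
noncomputable def simpleEdges (G : Finset (Finset σ)) : Finset (Finset (Finset σ)) :=
  (edgeSet σ G).filter (fun F => SimpleEdge σ G F)

/-- `H(I)` has isolated simple edges: every open vertex is contained in
exactly one simple edge. -/
def HasIsolatedSimpleEdges (G : Finset (Finset σ)) : Prop :=
  ∀ v ∈ G, ¬ Closed σ G v → ∃! F : Finset (Finset σ), SimpleEdge σ G F ∧ v ∈ F

/-! ### Regularity via graded Betti numbers.
`β_{ij}(R/I) = dim_K Tor_i^R(R/I,K)_j` where `Tor` is computed by the Koszul
complex on the variables of `R` tensored with `R/I`; its `i`-th term has basis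
indexed by `i`-element subsets of the variables, with coefficients in `R/I`. -/

/-- Index of the degree-`i` term of the Koszul complex. -/
abbrev KT (i : ℕ) : Type _ := {T : Finset σ // T.card = i}

/-- The Koszul differential on `K_•(x_a : a) ⊗ R/I`. -/
noncomputable def kd (I : Ideal (MvPolynomial σ K)) (i : ℕ)
    (c : KT σ i →₀ (MvPolynomial σ K ⧸ I)) :
    KT σ (i - 1) →₀ (MvPolynomial σ K ⧸ I) :=
  c.sum fun T m => ∑ a ∈ T.1.attach,
    ((-1 : ℤ) ^ ((T.1.filter (fun b => b < a.1)).card)) •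
      Finsupp.single
        (⟨T.1.erase a.1, by rw [Finset.card_erase_of_mem a.2, T.2]⟩ : KT σ (i - 1))
        ((X a.1 : MvPolynomial σ K) • m)

/-- `c` is homogeneous of internal degree `j` (each coefficient at a size-`i`
subset is the class of a homogeneous polynomial of degree `j - i`). -/
def IsHomogEl (I : Ideal (MvPolynomial σ K)) (i j : ℕ)
    (c : KT σ i →₀ (MvPolynomial σ K ⧸ I)) : Prop :=
  ∀ T : KT σ i, ∃ p : MvPolynomial σ K,
    p.IsHomogeneous (j - i) ∧ Ideal.Quotient.mk I p = c T

/-- The graded Betti number `β_{ij}(R/I)` is nonzero: there is a homogeneous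
cycle of internal degree `j` in homological degree `i` of the Koszul complex
tensored with `R/I` which is not a boundary. -/
def BettiNe (I : Ideal (MvPolynomial σ K)) (i j : ℕ) : Prop :=
  ∃ c : KT σ i →₀ (MvPolynomial σ K ⧸ I),
    IsHomogEl σ K I i j c ∧ kd σ K I i c = 0 ∧
    ∀ b : KT σ (i + 1) →₀ (MvPolynomial σ K ⧸ I), kd σ K I (i + 1) b ≠ c

/-- Castelnuovo–Mumford regularity of `R/I`: `max { j - i : β_{ij}(R/I) ≠ 0 }`. -/
noncomputable def reg (I : Ideal (MvPolynomial σ K)) : ℤ :=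
  sSup { d : ℤ | ∃ i j : ℕ, BettiNe σ K I i j ∧ d = (j : ℤ) - (i : ℤ) }

/-- Projective dimension of `R/I`: `max { i : β_{ij}(R/I) ≠ 0 for some j }`. -/
noncomputable def pdim (I : Ideal (MvPolynomial σ K)) : ℕ :=
  sSup { i : ℕ | ∃ j : ℕ, BettiNe σ K I i j }

end SqfreeHyp

/-! ### The Koszul complex over the polynomial ring -/

namespace SqfreeHyp

section Koszul

set_option linter.unusedSectionVars false

variable {σ : Type} [Fintype σ] [LinearOrder σ] {K : Type} [Field K]

/-- The Koszul sign of the variable `a` against the index set `S`. -/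
def ksgn (a : σ) (S : Finset σ) : ℤ := (-1) ^ (S.filter (fun b => b < a)).card

lemma ksgn_mul_self (a : σ) (S : Finset σ) : ksgn a S * ksgn a S = 1 := by
  unfold ksgn
  rw [← mul_pow]; simp

lemma ksgn_insert_self (a : σ) (S : Finset σ) : ksgn a (insert a S) = ksgn a S := by
  unfold ksgn
  rw [Finset.filter_insert, if_neg (lt_irrefl a)]

lemma ksgn_insert {a b : σ} {S : Finset σ} (hb : b ∉ S) :
    ksgn a (insert b S) = if b < a then -ksgn a S else ksgn a S := by
  unfold ksgn
  rw [Finset.filter_insert]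
  split_ifs with h
  · rw [Finset.card_insert_of_notMem (by simp [hb]), pow_succ]; ring
  · rfl

lemma ksgn_swap {a b : σ} {S : Finset σ} (hab : a ≠ b) (ha : a ∉ S) (hb : b ∉ S) :
    ksgn a S * ksgn b (insert a S) = -(ksgn b S * ksgn a (insert b S)) := by
  rw [ksgn_insert ha, ksgn_insert hb]
  rcases lt_or_gt_of_ne hab with h | h
  · rw [if_pos h, if_neg h.not_gt]; ring
  · rw [if_neg h.not_gt, if_pos h]; ring

/-- The total Koszul differential on the variables over the polynomial ring: a family
`f : Finset σ → R` stands for the chain `∑ f S e_S`, all homological degrees at once. -/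
noncomputable def dK :
    (Finset σ → MvPolynomial σ K) →ₗ[MvPolynomial σ K] (Finset σ → MvPolynomial σ K) where
  toFun f S := ∑ a ∈ Sᶜ, ksgn a S • (X a * f (insert a S))
  map_add' f g := by
    funext S
    simp [mul_add, Finset.sum_add_distrib]
  map_smul' r f := by
    funext S
    simp only [Pi.smul_apply, smul_eq_mul, RingHom.id_apply, Finset.mul_sum]
    refine Finset.sum_congr rfl fun a _ => ?_
    rw [mul_smul_comm]; congr 1; ring

lemma dK_apply (f : Finset σ → MvPolynomial σ K) (S : Finset σ) :
    dK f S = ∑ a ∈ Sᶜ, ksgn a S • (X a * f (insert a S)) := rfl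

lemma dK_dK (f : Finset σ → MvPolynomial σ K) : dK (dK f) = 0 := by
  funext S
  simp only [dK_apply, Finset.mul_sum, Finset.smul_sum, Pi.zero_apply]
  rw [Finset.sum_sigma']
  -- the terms indexed by `(a, b)` and `(b, a)` cancel
  refine Finset.sum_involution (fun x _ => ⟨x.2, x.1⟩) ?_ ?_ ?_ ?_
  · rintro ⟨a, b⟩ h
    simp only [Finset.mem_sigma, Finset.mem_compl, Finset.mem_insert, not_or] at h
    obtain ⟨ha, hba, hb⟩ := h
    simp only [mul_smul_comm, smul_smul]
    rw [ksgn_swap (Ne.symm hba) ha hb, Finset.insert_comm b a, neg_smul, mul_left_comm]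
    exact neg_add_cancel _
  · rintro ⟨a, b⟩ h _ h2
    simp only [Finset.mem_sigma, Finset.mem_compl, Finset.mem_insert, not_or] at h
    simp only [Sigma.mk.injEq] at h2
    exact h.2.1 h2.1
  · rintro ⟨a, b⟩ h
    simp only [Finset.mem_sigma, Finset.mem_compl, Finset.mem_insert, not_or] at h ⊢
    exact ⟨h.2.2, fun h' => h.2.1 h'.symm, h.1⟩
  · rintro ⟨a, b⟩ h; rfl

lemma dK_mem {I : Ideal (MvPolynomial σ K)} {f : Finset σ → MvPolynomial σ K}
    (h : ∀ S, f S ∈ I) (S : Finset σ) : dK f S ∈ I :=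
  I.sum_mem fun _ _ => zsmul_mem (I.mul_mem_left _ (h _)) _

/-- Koszul homology of `R/I` vanishes in coefficient degree `e + 1` (in every homological
degree), the bounding chain being homogeneous too. Chains over `R/I` are given by
lifts to `R`. -/
def KVanish (I : Ideal (MvPolynomial σ K)) (e : ℕ) : Prop :=
  ∀ f : Finset σ → MvPolynomial σ K, (∀ S, (f S).IsHomogeneous (e + 1)) →
    (∀ S, dK f S ∈ I) →
    ∃ g : Finset σ → MvPolynomial σ K, (∀ S, (g S).IsHomogeneous e) ∧
      ∀ S, f S - dK g S ∈ I

lemma isHomogeneous_zsmul {p : MvPolynomial σ K} {n : ℕ} (h : p.IsHomogeneous n) (z : ℤ) :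
    (z • p).IsHomogeneous n :=
  (homogeneousSubmodule σ K n).toAddSubgroup.zsmul_mem h z

lemma dK_isHomogeneous {f : Finset σ → MvPolynomial σ K} {e : ℕ}
    (h : ∀ S, (f S).IsHomogeneous e) (S : Finset σ) : (dK f S).IsHomogeneous (e + 1) := by
  rw [dK_apply]
  refine IsHomogeneous.sum _ _ _ fun a _ => isHomogeneous_zsmul ?_ _
  rw [add_comm]
  exact (isHomogeneous_X K a).mul (h _)

lemma isHomogeneous_of_X_mul {v : σ} {q : MvPolynomial σ K} {e : ℕ}
    (h : (X v * q).IsHomogeneous (e + 1)) : q.IsHomogeneous e := by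
  intro m hm
  have := h (d := Finsupp.single v 1 + m) (by rwa [coeff_X_mul])
  simp only [map_add, Finsupp.weight_single] at this
  simp at this
  omega

/-- The step along `0 → R/I'(-1) → R/(X_v I') → R/(X_v) → 0`, whose first map is
multiplication by `X_v`. -/
lemma KVanish.X_mul {I' : Ideal (MvPolynomial σ K)} {v : σ} {e : ℕ}
    (h1 : KVanish (Ideal.span {(X v : MvPolynomial σ K)}) (e + 1)) (h2 : KVanish I' e) :
    KVanish (Ideal.span {(X v : MvPolynomial σ K)} * I') (e + 1) := by
  intro f hf hcyc
  have hcyc1 : ∀ S, dK f S ∈ Ideal.span {(X v : MvPolynomial σ K)} := fun S =>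
    Ideal.mul_le_left (hcyc S)
  obtain ⟨g, hg, hfg⟩ := h1 f hf hcyc1
  choose q hq using fun S => Ideal.mem_span_singleton.1 (hfg S)
  have hq' : f - dK g = (X v : MvPolynomial σ K) • q := by
    funext S
    rw [Pi.sub_apply, Pi.smul_apply, smul_eq_mul, hq]
  have hqh : ∀ S, (q S).IsHomogeneous (e + 1) := fun S =>
    isHomogeneous_of_X_mul (v := v) (by
      rw [← hq]; exact (hf S).sub (dK_isHomogeneous hg S))
  have hdq : dK f = (X v : MvPolynomial σ K) • dK q := by
    rw [← map_smul, ← hq', map_sub, dK_dK, sub_zero]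
  have hqc : ∀ S, dK q S ∈ I' := fun S => by
    obtain ⟨z, hz, hz'⟩ := Ideal.mem_span_singleton_mul.1 (hcyc S)
    rw [hdq, Pi.smul_apply, smul_eq_mul] at hz'
    rwa [← mul_left_cancel₀ (X_ne_zero v) hz']
  obtain ⟨g', hg', hqg⟩ := h2 q hqh hqc
  refine ⟨g + (X v : MvPolynomial σ K) • g', fun S => (hg S).add ?_, fun S => ?_⟩
  · rw [Pi.smul_apply, smul_eq_mul, add_comm e]
    exact (isHomogeneous_X K v).mul (hg' S)
  · refine Ideal.mem_span_singleton_mul.2 ⟨_, hqg S, ?_⟩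
    rw [map_add, map_smul, Pi.add_apply, Pi.smul_apply, smul_eq_mul, mul_sub, ← hq]
    ring

/-! ### Homotopies dividing by a variable -/

/-- Division by `X_v`, killing the monomials not divisible by `X_v`. -/
noncomputable def divX (v : σ) : MvPolynomial σ K →+ MvPolynomial σ K where
  toFun p := p.divMonomial (Finsupp.single v 1)
  map_zero' := zero_divMonomial _
  map_add' p q := add_divMonomial p q _

lemma coeff_divX (v : σ) (p : MvPolynomial σ K) (m : σ →₀ ℕ) :
    coeff m (divX v p) = coeff (Finsupp.single v 1 + m) p := coeff_divMonomial _ _ _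

lemma divX_X_mul_self (v : σ) (p : MvPolynomial σ K) : divX v (X v * p) = p :=
  X_mul_divMonomial v p

lemma divX_X_mul_of_ne {v w : σ} (h : w ≠ v) (p : MvPolynomial σ K) :
    divX v (X w * p) = X w * divX v p := by
  ext m
  rw [coeff_divX, coeff_X_mul', coeff_X_mul', coeff_divX]
  have hs : w ∈ (Finsupp.single v 1 + m).support ↔ w ∈ m.support := by
    simp [h.symm]
  simp only [hs]
  split_ifs with hw
  · congr 1
    ext u
    have : 0 < m w := Nat.pos_of_ne_zero (Finsupp.mem_support_iff.1 hw)
    by_cases hu : w = u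
    · subst hu; simp [h.symm]
    · simp [hu, Finsupp.single_apply]
  · rfl

lemma divX_isHomogeneous {v : σ} {p : MvPolynomial σ K} {e : ℕ}
    (h : p.IsHomogeneous (e + 1)) : (divX v p).IsHomogeneous e := by
  intro m hm
  rw [coeff_divX] at hm
  have := h hm
  simp only [map_add, Finsupp.weight_single] at this
  simp at this
  omega

lemma divX_mem {V : Set σ} {v : σ} (hv : v ∉ V) {p : MvPolynomial σ K}
    (hp : p ∈ Ideal.span (X '' V : Set (MvPolynomial σ K))) :
    divX v p ∈ Ideal.span (X '' V : Set (MvPolynomial σ K)) := by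
  rw [mem_ideal_span_X_image] at hp ⊢
  intro m hm
  rw [mem_support_iff, coeff_divX, ← mem_support_iff] at hm
  obtain ⟨i, hi, hmi⟩ := hp _ hm
  refine ⟨i, hi, ?_⟩
  have : v ≠ i := fun h => hv (h ▸ hi)
  simpa [Finsupp.single_apply, this] using hmi

/-- The homotopy `p e_S ↦ (p / X_v) e_v ∧ e_S`. -/
noncomputable def hK (v : σ) (f : Finset σ → MvPolynomial σ K) :
    Finset σ → MvPolynomial σ K :=
  fun S => if v ∈ S then ksgn v S • divX v (f (S.erase v)) else 0

/-- The projection onto the chains that involve neither `e_v` nor the variable `X_v`. -/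
noncomputable def projK (v : σ) (f : Finset σ → MvPolynomial σ K) :
    Finset σ → MvPolynomial σ K :=
  fun S => if v ∈ S then 0 else (f S).modMonomial (Finsupp.single v 1)

lemma homotopy (v : σ) (f : Finset σ → MvPolynomial σ K) :
    dK (hK v f) + hK v (dK f) = f - projK v f := by
  funext S
  simp only [Pi.add_apply, Pi.sub_apply]
  by_cases hv : v ∈ S
  · obtain ⟨T, hvT, rfl⟩ : ∃ T, v ∉ T ∧ insert v T = S :=
      ⟨S.erase v, Finset.notMem_erase v S, Finset.insert_erase hv⟩
    have e1 : projK v f (insert v T) = 0 := by simp [projK]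
    have e2 : hK v (dK f) (insert v T) = ksgn v T • divX v (dK f T) := by
      simp [hK, ksgn_insert_self, Finset.erase_insert hvT]
    have hc : Tᶜ = insert v (insert v T)ᶜ := by
      ext a; by_cases h : a = v <;> simp [h, hvT]
    rw [e1, e2, dK_apply, dK_apply, hc, Finset.sum_insert (by simp), map_add, map_zsmul,
      divX_X_mul_self, smul_add, smul_smul, ksgn_mul_self, one_smul, sub_zero, add_left_comm,
      map_sum, Finset.smul_sum, ← Finset.sum_add_distrib]
    rw [add_eq_left]
    refine Finset.sum_eq_zero fun a ha => ?_
    simp only [Finset.mem_compl, Finset.mem_insert, not_or] at ha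
    obtain ⟨hav, haT⟩ := ha
    have e3 : hK v f (insert a (insert v T)) =
        ksgn v (insert a T) • divX v (f (insert a T)) := by
      have : v ∉ insert a T := by simp [hvT, Ne.symm hav]
      rw [Finset.insert_comm]
      simp [hK, ksgn_insert_self, Finset.erase_insert this]
    rw [e3, map_zsmul, divX_X_mul_of_ne hav, mul_smul_comm, smul_smul, smul_smul,
      mul_comm (ksgn a (insert v T)), ← add_smul]
    rw [show ksgn v (insert a T) * ksgn a (insert v T) + ksgn v T * ksgn a T = 0 from ?_, zero_smul]
    rw [ksgn_insert haT, ksgn_insert hvT]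
    rcases lt_or_gt_of_ne hav with h | h
    · rw [if_pos h, if_neg h.not_gt]; ring
    · rw [if_neg h.not_gt, if_pos h]; ring
  · have e1 : hK v (dK f) S = 0 := by simp [hK, hv]
    rw [e1, add_zero, dK_apply, Finset.sum_eq_single_of_mem v (by simpa using hv)]
    · simp only [hK, Finset.mem_insert_self, if_true, Finset.erase_insert hv, projK, hv, if_false,
        ksgn_insert_self, mul_smul_comm, smul_smul, ksgn_mul_self, one_smul]
      rw [eq_sub_iff_add_eq]
      exact divMonomial_add_modMonomial_single _ _
    · intro a _ hav
      simp [hK, hv, Ne.symm hav]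

lemma modX_coeff (v : σ) (p : MvPolynomial σ K) (m : σ →₀ ℕ) :
    coeff m (p.modMonomial (Finsupp.single v 1)) = if m v = 0 then coeff m p else 0 := by
  split_ifs with h
  · exact coeff_modMonomial_of_not_le _ (by simp [Finsupp.single_le_iff, h])
  · exact coeff_modMonomial_of_le _ (by
      rw [Finsupp.single_le_iff]; exact Nat.one_le_iff_ne_zero.2 h)

lemma projK_coeff_ne {v : σ} {f : Finset σ → MvPolynomial σ K} {S : Finset σ} {m : σ →₀ ℕ}
    (h : coeff m (projK v f S) ≠ 0) : m v = 0 ∧ coeff m (f S) ≠ 0 := by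
  unfold projK at h
  split_ifs at h
  · simp at h
  · rw [modX_coeff] at h
    split_ifs at h with h'
    · exact ⟨h', h⟩
    · exact absurd rfl h

/-- The homotopies for the variables of `L` move a cycle over `R/(V)` to a homologous one
without those variables in its coefficients. -/
lemma exists_reduce {V : Set σ} {e : ℕ} (L : Finset σ) (hL : ∀ v ∈ L, v ∉ V)
    (f : Finset σ → MvPolynomial σ K) (hf : ∀ S, (f S).IsHomogeneous (e + 1))
    (hcyc : ∀ S, dK f S ∈ Ideal.span (X '' V : Set (MvPolynomial σ K))) :
    ∃ f' g : Finset σ → MvPolynomial σ K, (∀ S, (f' S).IsHomogeneous (e + 1)) ∧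
      (∀ S, (g S).IsHomogeneous e) ∧
      (∀ S, f S - dK g S - f' S ∈ Ideal.span (X '' V : Set (MvPolynomial σ K))) ∧
      ∀ v ∈ L, ∀ S m, coeff m (f' S) ≠ 0 → m v = 0 := by
  induction L using Finset.induction_on with
  | empty => exact ⟨f, 0, hf, fun S => isHomogeneous_zero _ _ _, fun S => by simp, by simp⟩
  | insert v L hvL ih =>
    obtain ⟨f', g, hf', hg, hfg, hv'⟩ := ih fun w hw => hL w (Finset.mem_insert_of_mem hw)
    have hvV := hL v (Finset.mem_insert_self v L)
    have hcyc' : ∀ S, dK f' S ∈ Ideal.span (X '' V : Set (MvPolynomial σ K)) := fun S => by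
      have h1 := dK_mem (f := f - dK g - f') hfg S
      rw [map_sub, map_sub, dK_dK, sub_zero, Pi.sub_apply] at h1
      exact (Submodule.sub_mem_iff_right _ (hcyc S)).1 h1
    refine ⟨projK v f', g + hK v f', fun S m hm => hf' S (projK_coeff_ne hm).2,
      fun S => (hg S).add ?_, fun S => ?_, fun w hw S m hm => ?_⟩
    · unfold hK
      split_ifs
      · exact isHomogeneous_zsmul (divX_isHomogeneous (hf' _)) _
      · exact isHomogeneous_zero _ _ _
    · have h1 := congrFun (homotopy v f') S
      have h2 : hK v (dK f') S ∈ Ideal.span (X '' V : Set (MvPolynomial σ K)) := by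
        unfold hK
        split_ifs
        · exact zsmul_mem (divX_mem hvV (hcyc' _)) _
        · exact Ideal.zero_mem _
      have h3 := add_mem (hfg S) h2
      convert h3 using 1
      simp only [Pi.add_apply, Pi.sub_apply, map_add] at h1 ⊢
      linear_combination -h1
    · rcases Finset.mem_insert.1 hw with rfl | hw
      · exact (projK_coeff_ne hm).1
      · exact hv' w hw S m (projK_coeff_ne hm).2

/-- `R/(V)` has regularity zero for a set `V` of variables. -/
lemma KVanish.span_X (V : Set σ) (e : ℕ) :
    KVanish (Ideal.span (X '' V : Set (MvPolynomial σ K))) e := by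
  intro f hf hcyc
  obtain ⟨f', g, hf', hg, hfg, hv⟩ :=
    exists_reduce (Finset.univ.filter (· ∉ V)) (by simp) f hf hcyc
  refine ⟨g, hg, fun S => ?_⟩
  refine (Submodule.sub_mem_iff_left _ ?_).1 (hfg S)
  rw [mem_ideal_span_X_image]
  intro m hm
  by_contra! hcon
  have hm0 : m = 0 := by
    ext v
    by_cases h : v ∈ V
    · exact hcon v h
    · exact hv v (by simpa using h) S m (mem_support_iff.1 hm)
  have := hf' S (mem_support_iff.1 hm)
  simp [hm0] at this

/-! ### Lifting the Koszul complex of `R/I` to `R` -/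

/-- Extension by zero of a chain of homological degree `i` to all index sets. -/
noncomputable def extK {I : Ideal (MvPolynomial σ K)} {i : ℕ}
    (c : KT σ i →₀ (MvPolynomial σ K ⧸ I)) (S : Finset σ) : MvPolynomial σ K ⧸ I :=
  if h : S.card = i then c ⟨S, h⟩ else 0

/-- The coefficientwise formula for `kd`, with the sum over the faces of each `T` turned into a sum
over the `a ∉ S`. -/
lemma kd_apply (I : Ideal (MvPolynomial σ K)) (n : ℕ)
    (c : KT σ (n + 1) →₀ (MvPolynomial σ K ⧸ I)) (S : KT σ n) :
    (kd σ K I (n + 1) c : KT σ n →₀ (MvPolynomial σ K ⧸ I)) S =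
      ∑ a ∈ (S.1)ᶜ, ksgn a S.1 • ((X a : MvPolynomial σ K) • extK c (insert a S.1)) := by
  have h1 : (kd σ K I (n + 1) c : KT σ n →₀ (MvPolynomial σ K ⧸ I)) S =
      ∑ T : KT σ (n + 1), ∑ a : σ, if a ∈ T.1 ∧ T.1.erase a = S.1 then
        ksgn a T.1 • ((X a : MvPolynomial σ K) • extK c T.1) else 0 := by
    unfold kd
    rw [Finsupp.sum_fintype _ _ (by simp)]
    rw [Finsupp.finsetSum_apply]
    refine Finset.sum_congr rfl fun T _ => ?_
    rw [Finsupp.finsetSum_apply, ← Finset.sum_filter_add_sum_filter_not Finset.univ (· ∈ T.1)]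
    rw [Finset.sum_eq_zero (s := Finset.univ.filter (¬ · ∈ T.1)), add_zero]
    · rw [Finset.filter_univ_mem, ← Finset.sum_attach T.1]
      refine Finset.sum_congr rfl fun a _ => ?_
      rw [Finsupp.smul_apply, Finsupp.single_apply]
      have hT : extK c T.1 = c T := by simp [extK, T.2]
      by_cases h : T.1.erase a.1 = S.1
      · rw [if_pos (Subtype.ext h), if_pos ⟨a.2, h⟩, hT]; rfl
      · rw [if_neg (fun h' => h (congrArg Subtype.val h')), if_neg (fun h' => h h'.2), smul_zero]
    · intro a ha
      rw [if_neg (fun h' => (Finset.mem_filter.1 ha).2 h'.1)]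
  rw [h1, Finset.sum_comm, ← Finset.sum_subset (Finset.subset_univ (S.1)ᶜ)]
  · refine Finset.sum_congr rfl fun a ha => ?_
    have ha' : a ∉ S.1 := Finset.mem_compl.1 ha
    rw [Finset.sum_eq_single (⟨insert a S.1, by rw [Finset.card_insert_of_notMem ha', S.2]⟩ :
      KT σ (n + 1))]
    · simp [Finset.erase_insert ha', ksgn_insert_self]
    · intro T _ hT
      refine if_neg fun h => hT (Subtype.ext ?_)
      simp [← h.2, Finset.insert_erase h.1]
    · simp
  · intro a _ ha
    refine Finset.sum_eq_zero fun T _ => if_neg fun h => ha ?_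
    rw [← h.2]; simp

lemma extK_eq_zero {I : Ideal (MvPolynomial σ K)} {i : ℕ}
    (c : KT σ i →₀ (MvPolynomial σ K ⧸ I)) {S : Finset σ} (h : S.card ≠ i) :
    extK c S = 0 := dif_neg h

/-- If `f` lifts `c`, then `dK f` reduces modulo `I` to the expression of `kd c` in `kd_apply`. -/
lemma mk_dK {I : Ideal (MvPolynomial σ K)} {i : ℕ}
    {c : KT σ i →₀ (MvPolynomial σ K ⧸ I)} {f : Finset σ → MvPolynomial σ K} {S : Finset σ}
    (h : ∀ a ∉ S, Ideal.Quotient.mk I (f (insert a S)) = extK c (insert a S)) :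
    Ideal.Quotient.mk I (dK f S) =
      ∑ a ∈ Sᶜ, ksgn a S • ((X a : MvPolynomial σ K) • extK c (insert a S)) := by
  rw [dK_apply, map_sum]
  refine Finset.sum_congr rfl fun a ha => ?_
  rw [map_zsmul, ← h a (Finset.mem_compl.1 ha), map_mul]
  rfl

/-- Vanishing of Koszul homology of lifts, stated for all homological degrees at once, kills
`β_{ij}` with `j - i = e + 1`. -/
lemma not_bettiNe {I : Ideal (MvPolynomial σ K)} {i j e : ℕ} (hI : KVanish I e)
    (hj : j - i = e + 1) : ¬ BettiNe σ K I i j := by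
  rintro ⟨c, hc, hcyc, hb⟩
  choose p hp hpc using hc
  let f : Finset σ → MvPolynomial σ K := fun S => if h : S.card = i then p ⟨S, h⟩ else 0
  have hfc : ∀ S, Ideal.Quotient.mk I (f S) = extK c S := fun S => by
    simp only [f, extK]
    split_ifs with h
    · exact hpc _
    · exact map_zero _
  have hfh : ∀ S, (f S).IsHomogeneous (e + 1) := fun S => by
    simp only [f]
    split_ifs with h
    · exact hj ▸ hp _
    · exact isHomogeneous_zero _ _ _
  have hfcyc : ∀ S, dK f S ∈ I := fun S => by
    rw [← Ideal.Quotient.eq_zero_iff_mem, mk_dK fun a _ => hfc _]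
    by_cases h : S.card + 1 = i
    · subst h
      rw [← kd_apply I S.card c ⟨S, rfl⟩, hcyc]
      rfl
    · refine Finset.sum_eq_zero fun a ha => ?_
      rw [extK_eq_zero c, smul_zero, smul_zero]
      rwa [Finset.card_insert_of_notMem (Finset.mem_compl.1 ha)]
  obtain ⟨g, -, hg⟩ := hI f hfh hfcyc
  refine hb (Finsupp.equivFunOnFinite.symm fun T => Ideal.Quotient.mk I (g T.1)) ?_
  refine Finsupp.ext fun (S : KT σ i) => ?_
  rw [kd_apply, ← mk_dK (f := g)]
  · rw [← (Ideal.Quotient.eq (I := I)).2 (hg S.1), hfc, extK, dif_pos S.2]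
  · intro a ha
    rw [extK, dif_pos (by rw [Finset.card_insert_of_notMem ha, S.2])]
    rfl

/-- A generator `X_v q` of `I` outside `𝔪 I` gives a nonzero class in `Tor_1(R/I, K)`: the
cycle `q e_v` is not a boundary, as the differential maps boundaries (lifted to `R`)
into `𝔪 I`. -/
lemma bettiNe_one {I : Ideal (MvPolynomial σ K)} {v : σ} {q : MvPolynomial σ K} {e : ℕ}
    (hq : q.IsHomogeneous e) (hI : X v * q ∈ I)
    (hmin : ∀ r : σ → MvPolynomial σ K, (∀ a, r a ∈ I) → ∑ a, X a * r a ≠ X v * q) :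
    BettiNe σ K I 1 (e + 1) := by
  set c : KT σ 1 →₀ (MvPolynomial σ K ⧸ I) :=
    Finsupp.single ⟨{v}, Finset.card_singleton v⟩ (Ideal.Quotient.mk I q) with hcdef
  set f : Finset σ → MvPolynomial σ K := fun S => if S = {v} then q else 0 with hfdef
  have hfc : ∀ S, Ideal.Quotient.mk I (f S) = extK c S := fun S => by
    by_cases h : S = {v}
    · subst h; simp [f, c, extK]
    · have : extK c S = 0 := by
        unfold extK
        split_ifs with h'
        · rw [hcdef, Finsupp.single_eq_of_ne (fun h2 => h (congrArg Subtype.val h2))]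
        · rfl
      rw [this]; simp [f, h]
  have hdf : dK f ∅ = X v * q := by
    rw [dK_apply, Finset.sum_eq_single_of_mem v (by simp)]
    · simp [f, ksgn]
    · intro a _ hav
      simp [f, hav]
  refine ⟨c, fun T => ?_, ?_, fun b hb => ?_⟩
  · refine ⟨f T.1, ?_, ?_⟩
    · simp only [f]
      split_ifs
      · simpa using hq
      · exact isHomogeneous_zero _ _ _
    · rw [hfc, extK, dif_pos T.2]
  · refine Finsupp.ext fun (S : KT σ 0) => ?_
    have hS : S.1 = ∅ := Finset.card_eq_zero.1 S.2
    rw [kd_apply, ← mk_dK (f := f) fun a _ => hfc _, hS, hdf]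
    exact Ideal.Quotient.eq_zero_iff_mem.2 hI
  · choose g hg using fun S => Ideal.Quotient.mk_surjective (extK b S)
    have hbd : ∀ a, f {a} - dK g {a} ∈ I := fun a => by
      refine Ideal.Quotient.eq.1 ?_
      rw [hfc, mk_dK fun a _ => hg _, ← hb]
      rw [extK, dif_pos (Finset.card_singleton a)]
      exact kd_apply I 1 b ⟨{a}, _⟩
    refine hmin _ hbd ?_
    have h0 : dK (f - dK g) ∅ = X v * q := by
      rw [map_sub, dK_dK, sub_zero, hdf]
    rw [← h0, dK_apply]
    simp [ksgn]

end Koszul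

/-- If all elements of `I` have order at least `e + 1`, those of `𝔪 I` have order at least `e + 2`,
so an element `X_v q` of `I` of degree `e + 1` lies outside `𝔪 I`. -/
lemma bettiNe_of_order {σ : Type} [Fintype σ] [LinearOrder σ] {K : Type} [Field K]
    {I : Ideal (MvPolynomial σ K)} {v : σ} {q : MvPolynomial σ K} {e : ℕ}
    (hq : q.IsHomogeneous e) (hq0 : q ≠ 0) (hI : X v * q ∈ I)
    (hord : ∀ p ∈ I, ∀ m : σ →₀ ℕ, coeff m p ≠ 0 → e + 1 ≤ m.degree) :
    BettiNe σ K I 1 (e + 1) := by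
  refine bettiNe_one hq hI fun r hr hsum => ?_
  obtain ⟨m, hm⟩ := ne_zero_iff.1 (mul_ne_zero (X_ne_zero v) hq0 : X v * q ≠ 0)
  have hdeg : m.degree = e + 1 := by
    by_contra h
    exact hm (((isHomogeneous_X K v).mul hq).coeff_eq_zero (by omega))
  rw [← hsum, coeff_sum] at hm
  obtain ⟨a, -, ha⟩ := Finset.exists_ne_zero_of_sum_ne_zero hm
  rw [coeff_X_mul'] at ha
  split_ifs at ha with h
  · have h1 := hord _ (hr a) _ ha
    have h2 : m - Finsupp.single a 1 + Finsupp.single a 1 = m :=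
      Finsupp.sub_add_single_one_cancel (Finsupp.mem_support_iff.1 h)
    have h3 := congrArg Finsupp.degree h2
    rw [map_add, Finsupp.degree_single] at h3
    omega
  · exact ha rfl

/-- Regularity is attained in homological degree one as soon as some generator has degree `d + 1`
and Koszul homology vanishes in all coefficient degrees above `d`. -/
lemma reg_eq {σ : Type} [Fintype σ] [LinearOrder σ] {K : Type} [Field K]
    {I : Ideal (MvPolynomial σ K)} {d : ℕ} (hne : BettiNe σ K I 1 (d + 1))
    (hv : ∀ e, KVanish I (e + d)) : reg σ K I = d := by
  refine IsGreatest.csSup_eq ⟨⟨1, d + 1, hne, by push_cast; ring⟩, ?_⟩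
  rintro _ ⟨i, j, hij, rfl⟩
  by_contra! hlt
  exact not_bettiNe (hv (j - i - 1 - d)) (by omega) hij


/-! ### The ideals `(ac, bc)` and `(acd, bcd)` -/

section Example

variable (K : Type) [Field K]

lemma monIdeal_I : monIdeal (Fin 4) K {{0, 2}, {1, 2}} =
    Ideal.span {(X 2 : MvPolynomial (Fin 4) K)} *
      Ideal.span (X '' {0, 1} : Set (MvPolynomial (Fin 4) K)) := by
  unfold monIdeal
  rw [Ideal.span_mul_span', Set.singleton_mul, Set.image_image]
  simp [Set.image_pair, sqMon, mul_comm]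

lemma monIdeal_J : monIdeal (Fin 4) K {{0, 2, 3}, {1, 2, 3}} =
    Ideal.span {(X 3 : MvPolynomial (Fin 4) K)} * (Ideal.span {(X 2 : MvPolynomial (Fin 4) K)} *
      Ideal.span (X '' {0, 1} : Set (MvPolynomial (Fin 4) K))) := by
  unfold monIdeal
  rw [Ideal.span_mul_span', Ideal.span_mul_span', Set.singleton_mul, Set.singleton_mul,
    Set.image_image, Set.image_image]
  simp [Set.image_pair, sqMon, mul_comm]
  simp only [mul_assoc]

lemma kVanish_span_singleton (v : Fin 4) (e : ℕ) :
    KVanish (Ideal.span {(X v : MvPolynomial (Fin 4) K)}) e := by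
  simpa using KVanish.span_X (K := K) {v} e

lemma sqMon_eq_monomial {σ : Type} [Fintype σ] [LinearOrder σ] (S : Finset σ) :
    sqMon σ K S = monomial (∑ a ∈ S, Finsupp.single a 1) 1 := by
  rw [monomial_sum_one]; rfl

/-- Elements of a square-free monomial ideal have order at least the least generator degree. -/
lemma order_le {σ : Type} [Fintype σ] [LinearOrder σ] {G : Finset (Finset σ)} {n : ℕ}
    (hG : ∀ S ∈ G, n ≤ S.card) (p : MvPolynomial σ K) (hp : p ∈ monIdeal σ K G)
    (m : σ →₀ ℕ) (hm : coeff m p ≠ 0) : n ≤ m.degree := by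
  have h : monIdeal σ K G = Ideal.span ((fun s => monomial s (1 : K)) ''
      ((fun S : Finset σ => ∑ a ∈ S, Finsupp.single a 1) '' (G : Set (Finset σ)))) := by
    rw [Set.image_image]; simp only [monIdeal, sqMon_eq_monomial]
  rw [h, mem_ideal_span_monomial_image] at hp
  obtain ⟨_, ⟨S, hS, rfl⟩, hle⟩ := hp m (mem_support_iff.2 hm)
  obtain ⟨t, rfl⟩ := exists_add_of_le hle
  refine (hG S hS).trans ?_
  simp [map_add, map_sum]

lemma reg_I : reg (Fin 4) K (monIdeal (Fin 4) K {{0, 2}, {1, 2}}) = 1 := by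
  refine reg_eq (d := 1) (bettiNe_of_order (v := 0) (q := X 2) (isHomogeneous_X K 2)
    (X_ne_zero 2) (Ideal.subset_span ⟨{0, 2}, by simp, by simp [sqMon]⟩)
    (order_le K (by decide))) fun e => ?_
  rw [monIdeal_I]
  exact (kVanish_span_singleton K 2 _).X_mul (KVanish.span_X _ _)

lemma reg_J : reg (Fin 4) K (monIdeal (Fin 4) K {{0, 2, 3}, {1, 2, 3}}) = 2 := by
  refine reg_eq (d := 2) (bettiNe_of_order (v := 0) (q := X 2 * X 3)
    ((isHomogeneous_X K 2).mul (isHomogeneous_X K 3))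
    (mul_ne_zero (X_ne_zero 2) (X_ne_zero 3))
    (Ideal.subset_span ⟨{0, 2, 3}, by simp, by simp [sqMon]⟩)
    (order_le K (by decide))) fun e => ?_
  rw [monIdeal_J]
  exact (kVanish_span_singleton K 3 _).X_mul
    ((kVanish_span_singleton K 2 _).X_mul (KVanish.span_X _ _))

end Example

end SqfreeHyp

open SqfreeHyp

/-- the ideals `I = (ac, bc)` and `J = (acd, bcd)` (variables
`a,b,c,d` = `0,1,2,3 : Fin 4`) have the same unlabeled hypergraph — the vertex
map `φ : S ↦ S ∪ {d}` is a bijection of the vertex sets identifying the edge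
sets, both being `{{1},{2},{1,2}}` — yet `reg(R/I) = 1` and `reg(R/J) = 2`. -/
theorem stmt_18 (K : Type) [Field K] :
    ∃ (GI GJ : Finset (Finset (Fin 4))) (φ : Finset (Fin 4) → Finset (Fin 4)),
      GI = {{0, 2}, {1, 2}} ∧ GJ = {{0, 2, 3}, {1, 2, 3}} ∧
      φ = (fun S => insert 3 S) ∧
      GJ = GI.image φ ∧ Set.InjOn φ GI ∧
      edgeSet (Fin 4) GJ = (edgeSet (Fin 4) GI).image (Finset.image φ) ∧
      reg (Fin 4) K (monIdeal (Fin 4) K GI) = 1 ∧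
      reg (Fin 4) K (monIdeal (Fin 4) K GJ) = 2 := by
  refine ⟨_, _, _, rfl, rfl, rfl, by decide, ?_, ?_, reg_I K, reg_J K⟩
  · decide
  · decide
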